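/- arXiv:1310.2261 — 2 statements merged into one kernel-verified Lean document; each statement's English description precedes it below -/
import Mathlib

section
/- For every even integer n ≥ 2, the sum Σ_{m=0}^{n−1} f_m(1−n) is negative, where f_m(q) = q^{m(m−1)/2} · ∏_{i=1}^{m}(q^i − 1) with f_0(q) = 1. -/
/-!
The sum is negative at every integer `q ≤ -1` as soon as it has a positive even number of terms.
Group the terms in pairs `f_{2k} + f_{2k+1}`. The recursion `f_{m+1} = f_m · q^m (q^{m+1} - 1)`
gives `f_{2k+2} = f_{2k} · q^{2k} q^{2k+1} (q^{2k+1} - 1) (q^{2k+2} - 1)`, a product in which exactly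
two factors are negative, so `f_{2k} ≥ 0`; and since `q^{2k} ≥ 1` and `q^{2k+1} - 1 ≤ -2`, each pair
`f_{2k} (1 + q^{2k} (q^{2k+1} - 1))` is nonpositive. The pair `k = 0` equals `q < 0`.
-/

/-- `f m q = q^(m(m-1)/2) * (q-1)(q²-1)⋯(q^m-1)`, the number of `𝔽_q`-points of `GL_m`. -/
def glCount (m : ℕ) (q : ℤ) : ℤ :=
  q ^ (m * (m - 1) / 2) * ∏ i ∈ Finset.Icc 1 m, (q ^ i - 1)

theorem glCount_succ (m : ℕ) (q : ℤ) :
    glCount (m + 1) q = glCount m q * (q ^ m * (q ^ (m + 1) - 1)) := by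
  unfold glCount
  rw [Nat.triangle_succ, Finset.prod_Icc_succ_top (by omega), pow_add]
  ring

theorem one_le_pow_even {q : ℤ} (hq : q ≤ -1) (k : ℕ) : 1 ≤ q ^ (2 * k) := by
  rw [pow_mul]
  exact one_le_pow₀ (by nlinarith)

theorem pow_odd_le_neg_one {q : ℤ} (hq : q ≤ -1) (k : ℕ) : q ^ (2 * k + 1) ≤ -1 := by
  rw [pow_succ]
  nlinarith [one_le_pow_even hq k]

theorem glCount_even_nonneg {q : ℤ} (hq : q ≤ -1) (k : ℕ) : 0 ≤ glCount (2 * k) q := by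
  induction k with
  | zero => simp [glCount]
  | succ k ih =>
    rw [show 2 * (k + 1) = 2 * k + 1 + 1 by ring, glCount_succ, glCount_succ, mul_assoc]
    have h0 := one_le_pow_even hq k
    have h1 := pow_odd_le_neg_one hq k
    have h2 : 1 ≤ q ^ (2 * k + 1 + 1) := one_le_pow_even hq (k + 1)
    refine mul_nonneg ih (mul_nonneg_of_nonpos_of_nonpos ?_ ?_)
    · exact mul_nonpos_of_nonneg_of_nonpos (by linarith) (by linarith)
    · exact mul_nonpos_of_nonpos_of_nonneg (by linarith) (by linarith)

theorem sum_glCount_neg {q : ℤ} (hq : q ≤ -1) (k : ℕ) :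
    ∑ m ∈ Finset.range (2 * (k + 1)), glCount m q < 0 := by
  induction k with
  | zero =>
    simp [Finset.sum_range_succ, glCount]
    linarith
  | succ k ih =>
    rw [show 2 * (k + 1 + 1) = 2 * (k + 1) + 1 + 1 by ring, Finset.sum_range_succ,
      Finset.sum_range_succ, glCount_succ]
    have hf := glCount_even_nonneg hq (k + 1)
    have h0 := one_le_pow_even hq (k + 1)
    have h1 := pow_odd_le_neg_one hq (k + 1)
    have h2 : q ^ (2 * (k + 1)) * (q ^ (2 * (k + 1) + 1) - 1) ≤ -1 := by nlinarith
    nlinarith [mul_le_mul_of_nonneg_left h2 hf]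

/-- For every even integer `n ≥ 2`, `Σ_{m=0}^{n-1} f_m(1-n) < 0`. -/
theorem glCount_sum_neg_of_even (n : ℕ) (hn : 2 ≤ n) (heven : Even n) :
    ∑ m ∈ Finset.range n, glCount m (1 - (n : ℤ)) < 0 := by
  have hq : 1 - (n : ℤ) ≤ -1 := by omega
  obtain ⟨k, hk⟩ : ∃ k, n = 2 * (k + 1) := by
    obtain ⟨r, hr⟩ := heven
    exact ⟨r - 1, by omega⟩
  have h := sum_glCount_neg hq k
  rwa [← hk] at h
end

section
/- For every integer n ≥ 4 with n ≡ 0 (mod 4), the sum Σ_{m=0}^{n/2−1} E_m(1−n) is negative, where E_m(q) = q^{m²} · ∏_{i=1}^{m}(q^{2i} − 1) with E_0(q) = 1. -/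
/-!
Consecutive terms satisfy `E (m+1) = E m * (q^(2m+1) * (q^(2m+2) - 1))`, and for `q ≤ -3` the
factor is less than `-1`: the first power is odd, hence at most `-1`, and `q^(2m+2) > 2`. So the
terms alternate in sign, start at `1`, and grow strictly in absolute value. As `4 ∣ n`, the number
`n / 2` of terms is even, and each pair `E (2k) + E (2k+1)` is negative.
-/

/-- `E m q = q^(m²) * (q²-1)(q⁴-1)⋯(q^(2m)-1)`, the number of solutions of the
matrix equation `X'AX = A` over `𝔽_q` for a nonsingular `2m × 2m` matrix `A`. -/
def matEqCount (m : ℕ) (q : ℤ) : ℤ :=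
  q ^ (m ^ 2) * ∏ i ∈ Finset.Icc 1 m, (q ^ (2 * i) - 1)

theorem matEqCount_succ (m : ℕ) (q : ℤ) :
    matEqCount (m + 1) q =
      matEqCount m q * (q ^ (2 * m + 1) * (q ^ (2 * m + 2) - 1)) := by
  unfold matEqCount
  rw [Finset.prod_Icc_succ_top (by omega)]
  ring

theorem two_lt_pow_even {q : ℤ} (hq : q ≤ -3) (m : ℕ) : 2 < q ^ (2 * m + 2) := by
  have h : 1 ≤ (q ^ 2) ^ m := one_le_pow₀ (by nlinarith)
  rw [pow_add, pow_mul]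
  nlinarith

theorem ratio_lt_neg_one {q : ℤ} (hq : q ≤ -3) (m : ℕ) :
    q ^ (2 * m + 1) * (q ^ (2 * m + 2) - 1) < -1 := by
  have h1 : q ^ (2 * m + 1) < 0 := Odd.pow_neg ⟨m, rfl⟩ (by omega)
  have h2 := two_lt_pow_even hq m
  nlinarith

theorem matEqCount_even_pos {q : ℤ} (hq : q ≤ -3) (k : ℕ) : 0 < matEqCount (2 * k) q := by
  unfold matEqCount
  refine mul_pos (Even.pow_pos ?_ (by omega)) (Finset.prod_pos fun i hi => ?_)
  · exact (even_two_mul k).pow_of_ne_zero two_ne_zero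
  · obtain ⟨j, rfl⟩ := Nat.exists_eq_add_of_le' (Finset.mem_Icc.mp hi).1
    have h := two_lt_pow_even hq j
    rw [mul_add]
    linarith

theorem matEqCount_pair_neg {q : ℤ} (hq : q ≤ -3) (k : ℕ) :
    matEqCount (2 * k) q + matEqCount (2 * k + 1) q < 0 := by
  rw [matEqCount_succ]
  nlinarith [matEqCount_even_pos hq k, ratio_lt_neg_one hq (2 * k)]

theorem sum_range_even_neg {q : ℤ} (hq : q ≤ -3) (k : ℕ) :
    ∑ m ∈ Finset.range (2 * (k + 1)), matEqCount m q < 0 := by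
  induction k with
  | zero => simpa [Finset.sum_range_succ] using matEqCount_pair_neg hq 0
  | succ k ih =>
    rw [show 2 * (k + 1 + 1) = 2 * (k + 1) + 1 + 1 by ring, Finset.sum_range_succ,
      Finset.sum_range_succ]
    linarith [matEqCount_pair_neg hq (k + 1)]

/-- For every integer `n ≥ 4` with `n ≡ 0 (mod 4)`, `Σ_{m=0}^{n/2-1} E_m(1-n) < 0`. -/
theorem matEqCount_sum_neg_of_zero_mod_four (n : ℕ) (hn : 4 ≤ n) (hmod : n % 4 = 0) :
    ∑ m ∈ Finset.range (n / 2), matEqCount m (1 - (n : ℤ)) < 0 := by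
  have h : n / 2 = 2 * ((n / 4 - 1) + 1) := by omega
  rw [h]
  exact sum_range_even_neg (q := 1 - n) (by omega) _
end
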